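/- Let V be a vertex operator algebra such that C₁(V) has finite codimension in V. Then V is finitely generated as a vertex operator algebra. -/

import Mathlib

noncomputable section

/-- The generalized binomial coefficient `C(m, i)` for `m ∈ ℤ`, `i ∈ ℕ`,
as a complex number: `m(m-1)⋯(m-i+1)/i!`. -/
def cchoose (m : ℤ) (i : ℕ) : ℂ :=
  (∏ j ∈ Finset.range i, ((m : ℂ) - (j : ℂ))) / (Nat.factorial i : ℂ)

/-- A vertex operator algebra `V = ⊕ₙ V₍ₙ₎` over `ℂ`.  The vertex operator map is
recorded through its modes `op u n v = uₙ v` (so `Y(u,x)v = Σₙ uₙv x^{-n-1}`), with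
vacuum `one`, conformal vector `omega` (with `L(k) = ω_{k+1}`), central charge `cc`,
weight grading `wtSpace` with projections `proj`.  The Jacobi identity is recorded in
the equivalent form of the Borcherds identity on modes. -/
structure VOA where
  carrier : Type
  [grp : AddCommGroup carrier]
  [mdl : Module ℂ carrier]
  op : carrier → ℤ → carrier → carrier
  one : carrier
  omega : carrier
  wtSpace : ℤ → Submodule ℂ carrier
  proj : ℤ → carrier → carrier
  cc : ℂ
  op_linear_left : ∀ (n : ℤ) (w : carrier), IsLinearMap ℂ fun u => op u n w
  op_linear_right : ∀ (u : carrier) (n : ℤ), IsLinearMap ℂ (op u n)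
  trunc : ∀ u v : carrier, ∃ N : ℤ, ∀ n : ℤ, N ≤ n → op u n v = 0
  one_op : ∀ (n : ℤ) (v : carrier), op one n v = if n = -1 then v else 0
  create_nonneg : ∀ (v : carrier) (n : ℤ), 0 ≤ n → op v n one = 0
  create : ∀ v : carrier, op v (-1) one = v
  borcherds : ∀ (u v w : carrier) (l m n : ℤ),
    (∑ᶠ i : ℕ, cchoose m i • op (op u (l + (i : ℤ)) v) (m + n - (i : ℤ)) w)
      = ∑ᶠ i : ℕ, ((-1 : ℂ) ^ i * cchoose l i) •
          (op u (l + m - (i : ℤ)) (op v (n + (i : ℤ)) w)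
            - ((-1 : ℂ) ^ l) • op v (l + n - (i : ℤ)) (op u (m + (i : ℤ)) w))
  proj_linear : ∀ n : ℤ, IsLinearMap ℂ (proj n)
  proj_mem : ∀ (n : ℤ) (v : carrier), proj n v ∈ wtSpace n
  proj_eq : ∀ n : ℤ, ∀ v ∈ wtSpace n, proj n v = v
  proj_ne : ∀ m n : ℤ, m ≠ n → ∀ v ∈ wtSpace m, proj n v = 0
  proj_finite : ∀ v : carrier, (Function.support fun n => proj n v).Finite
  proj_sum : ∀ v : carrier, (∑ᶠ n : ℤ, proj n v) = v
  fd : ∀ n : ℤ, FiniteDimensional ℂ (wtSpace n)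
  lower_trunc : ∃ N : ℤ, ∀ n : ℤ, n < N → wtSpace n = ⊥
  one_wt : one ∈ wtSpace 0
  omega_wt : omega ∈ wtSpace 2
  op_wt : ∀ k m n : ℤ, ∀ u ∈ wtSpace k, ∀ v ∈ wtSpace m, op u n v ∈ wtSpace (k + m - n - 1)
  L_zero : ∀ n : ℤ, ∀ v ∈ wtSpace n, op omega 1 v = (n : ℂ) • v
  L_neg_one : ∀ (u : carrier) (n : ℤ) (w : carrier),
    op (op omega 0 u) n w = (-(n : ℂ)) • op u (n - 1) w
  virasoro : ∀ (m n : ℤ) (v : carrier),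
    op omega (m + 1) (op omega (n + 1) v) - op omega (n + 1) (op omega (m + 1) v)
      = ((m : ℂ) - (n : ℂ)) • op omega (m + n + 1) v
        + (if m + n = 0 then (((m : ℂ) ^ 3 - (m : ℂ)) / 12) * cc else 0) • v

attribute [instance] VOA.grp VOA.mdl

namespace VOA

variable (V : VOA)

/-- The Virasoro operator `L(k) = ω_{k+1}`. -/
def L (k : ℤ) (v : V.carrier) : V.carrier := V.op V.omega (k + 1) v

/-- The positive-weight part `V₊ = ⊕_{n ≥ 1} V₍ₙ₎`. -/
def pos : Submodule ℂ V.carrier := ⨆ (n : ℤ) (_ : 1 ≤ n), V.wtSpace n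

/-- Zhu's subspace `C₂(V) = span{u₋₂v : u, v ∈ V}`. -/
def C2 : Submodule ℂ V.carrier :=
  Submodule.span ℂ {x : V.carrier | ∃ u v : V.carrier, x = V.op u (-2) v}

/-- The subspace `C₁(V) = span(v₋₁V₊ (v ∈ V₊) together with L(-1)V)`. -/
def C1 : Submodule ℂ V.carrier :=
  Submodule.span ℂ
    ({x : V.carrier | ∃ u ∈ V.pos, ∃ v ∈ V.pos, x = V.op u (-1) v}
      ∪ {x : V.carrier | ∃ v : V.carrier, x = V.op V.omega 0 v})

/-- Iterated application of modes: `iterApply [(u¹,n₁),…,(uʳ,n_r)] w = u¹_{n₁} ⋯ uʳ_{n_r} w`. -/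
def iterApply : List (V.carrier × ℤ) → V.carrier → V.carrier
  | [], w => w
  | p :: l, w => V.op p.1 p.2 (iterApply l w)

/-- `U ⊆ V` generates `V` as a vertex operator algebra:  `V` is linearly spanned by
the elements `u¹_{n₁} ⋯ uʳ_{n_r} 1` with `uⁱ ∈ U`, `n_i ∈ ℤ`. -/
def generates (U : Set V.carrier) : Prop :=
  Submodule.span ℂ {x : V.carrier | ∃ l : List (V.carrier × ℤ),
    (∀ p ∈ l, p.1 ∈ U) ∧ x = V.iterApply l V.one} = ⊤

/-- `V` is finitely generated as a vertex operator algebra. -/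
def FinitelyGenerated : Prop := ∃ S : Finset V.carrier, V.generates ↑S

end VOA

/-- A weak `V`-module: all axioms of a module (truncation, vacuum, Jacobi identity in
Borcherds form) except those involving gradings. -/
structure WeakModule (V : VOA) where
  carrier : Type
  [grp : AddCommGroup carrier]
  [mdl : Module ℂ carrier]
  op : V.carrier → ℤ → carrier → carrier
  op_linear_left : ∀ (n : ℤ) (w : carrier), IsLinearMap ℂ fun u => op u n w
  op_linear_right : ∀ (u : V.carrier) (n : ℤ), IsLinearMap ℂ (op u n)
  trunc : ∀ (u : V.carrier) (w : carrier), ∃ N : ℤ, ∀ n : ℤ, N ≤ n → op u n w = 0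
  one_op : ∀ (n : ℤ) (w : carrier), op V.one n w = if n = -1 then w else 0
  borcherds : ∀ (u v : V.carrier) (w : carrier) (l m n : ℤ),
    (∑ᶠ i : ℕ, cchoose m i • op (V.op u (l + (i : ℤ)) v) (m + n - (i : ℤ)) w)
      = ∑ᶠ i : ℕ, ((-1 : ℂ) ^ i * cchoose l i) •
          (op u (l + m - (i : ℤ)) (op v (n + (i : ℤ)) w)
            - ((-1 : ℂ) ^ l) • op v (l + n - (i : ℤ)) (op u (m + (i : ℤ)) w))

attribute [instance] WeakModule.grp WeakModule.mdl

namespace WeakModule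

variable {V : VOA} (W : WeakModule V)

/-- `L(0)` acting on a weak module, as a linear map. -/
def L0 : W.carrier →ₗ[ℂ] W.carrier := IsLinearMap.mk' _ (W.op_linear_right V.omega 1)

/-- The `L(0)`-eigenspace of eigenvalue `h`. -/
def eig (h : ℂ) : Submodule ℂ W.carrier :=
  LinearMap.ker (W.L0 - h • (LinearMap.id : W.carrier →ₗ[ℂ] W.carrier))

/-- The coefficient `v*ₙ` of the adjoint vertex operator
`⟨Y*(v,x)α, w⟩ = ⟨α, Y(e^{xL(1)}(-x^{-2})^{L(0)}v, x^{-1})w⟩` acting on the full dual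
space: for `v` homogeneous of weight `h`,
`(v*ₙ α)(w) = (-1)^h Σ_{i≥0} (1/i!) α((L(1)^i v)_{2h-n-i-2} w)`, extended to general
`v` via the weight-space projections. -/
def dmode (v : V.carrier) (n : ℤ) (α : W.carrier → ℂ) (w : W.carrier) : ℂ :=
  ∑ᶠ h : ℤ, ∑ᶠ i : ℕ,
    ((-1 : ℂ) ^ h / (Nat.factorial i : ℂ)) *
      α (W.op ((V.L 1)^[i] (V.proj h v)) (2 * h - n - (i : ℤ) - 2) w)

/-- `D(W) ⊆ W*`: the linear functionals `α` on `W` such that for every `v ∈ V`,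
`Y*(v,x)α ∈ W*((x))`, i.e. `v*ₙ α = 0` for `n` sufficiently large. -/
def DW : Set (W.carrier → ℂ) :=
  {α | IsLinearMap ℂ α ∧
    ∀ v : V.carrier, ∃ N : ℤ, ∀ n : ℤ, N ≤ n → ∀ w : W.carrier, W.dmode v n α w = 0}

/-- A subspace stable under all modes of all vertex operators, i.e. a `V`-submodule. -/
def IsStable (S : Submodule ℂ W.carrier) : Prop :=
  ∀ (v : V.carrier) (n : ℤ), ∀ m ∈ S, W.op v n m ∈ S

/-- An irreducible (nonzero, no proper nonzero stable subspaces) `V`-submodule. -/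
def IsIrreducibleSub (S : Submodule ℂ W.carrier) : Prop :=
  S ≠ ⊥ ∧ W.IsStable S ∧
    ∀ T : Submodule ℂ W.carrier, W.IsStable T → T ≤ S → T = ⊥ ∨ T = S

/-- A stable subspace which is an ordinary module: `L(0)` acts semisimply on it with
finite-dimensional eigenspaces, and for each `h` the eigenvalues `h + m` do not occur
for `m` a sufficiently negative integer. -/
def IsOrdinarySub (S : Submodule ℂ W.carrier) : Prop :=
  S ≤ (⨆ h : ℂ, W.eig h ⊓ S) ∧ (∀ h : ℂ, FiniteDimensional ℂ ↥(W.eig h ⊓ S)) ∧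
    ∀ h : ℂ, ∃ N : ℤ, ∀ m : ℤ, m ≤ N → W.eig (h + (m : ℂ)) ⊓ S = ⊥

/-- The weak module `W` is irreducible. -/
def IsIrreducible : Prop :=
  (⊥ : Submodule ℂ W.carrier) ≠ ⊤ ∧
    ∀ S : Submodule ℂ W.carrier, W.IsStable S → S = ⊥ ∨ S = ⊤

/-- `Cₙ(W) = span{v₋ₙw : v ∈ V, w ∈ W}`. -/
def Cn (n : ℤ) : Submodule ℂ W.carrier :=
  Submodule.span ℂ {x : W.carrier | ∃ (v : V.carrier) (w : W.carrier), x = W.op v (-n) w}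

/-- `B(W) = span(u₋₁W (u ∈ V₊) together with v₀W (v homogeneous, wt v ≥ 2))`. -/
def BW : Submodule ℂ W.carrier :=
  Submodule.span ℂ
    ({x : W.carrier | ∃ v ∈ V.pos, ∃ w : W.carrier, x = W.op v (-1) w}
      ∪ {x : W.carrier | ∃ k : ℤ, 2 ≤ k ∧ ∃ v ∈ V.wtSpace k, ∃ w : W.carrier, x = W.op v 0 w})

/-- Zhu's subspace `O(W) = span{Σ_{i≥0} C(wt v, i) v_{i-2} w}` so that `A(W) = W/O(W)`. -/
def OW : Submodule ℂ W.carrier :=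
  Submodule.span ℂ
    {x : W.carrier | ∃ (k : ℤ) (v : V.carrier), v ∈ V.wtSpace k ∧
      ∃ w : W.carrier, x = ∑ᶠ i : ℕ, cchoose k i • W.op v ((i : ℤ) - 2) w}

/-- A subspace `T ⊇ O(W)` of `W` is closed under the Frenkel–Zhu left and right
`A(V)`-actions `v * w = Σᵢ C(wt v, i) v_{i-1} w` and `w * v = Σᵢ C(wt v - 1, i) v_{i-1} w`;
for `T ⊇ O(W)` this expresses that `T/O(W)` is an `A(V)`-sub-bimodule of `A(W)`. -/
def BimoduleClosed (T : Submodule ℂ W.carrier) : Prop :=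
  ∀ k : ℤ, ∀ v ∈ V.wtSpace k, ∀ w ∈ T,
    (∑ᶠ i : ℕ, cchoose k i • W.op v ((i : ℤ) - 1) w) ∈ T ∧
    (∑ᶠ i : ℕ, cchoose (k - 1) i • W.op v ((i : ℤ) - 1) w) ∈ T

/-- Equivalence (isomorphism) of weak modules. -/
def Equiv (M N : WeakModule V) : Prop :=
  ∃ e : M.carrier ≃ₗ[ℂ] N.carrier,
    ∀ (v : V.carrier) (n : ℤ) (w : M.carrier), e (M.op v n w) = N.op v n (e w)

end WeakModule

/-- `V` is of class 𝒜: `L(0)` acts semisimply on every weak `V`-module. -/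
def VOA.classA (V : VOA) : Prop :=
  ∀ M : WeakModule V, (⨆ h : ℂ, M.eig h) = ⊤

/-- `V` is regular: every weak `V`-module is a direct sum of irreducible ordinary
`V`-modules. -/
def VOA.regular (V : VOA) : Prop :=
  ∀ M : WeakModule V, ∃ (ι : Type) (S : ι → Submodule ℂ M.carrier),
    (∀ i, M.IsIrreducibleSub (S i) ∧ M.IsOrdinarySub (S i)) ∧
    (∀ i, Disjoint (S i) (⨆ (j : ι) (_ : j ≠ i), S j)) ∧ (⨆ i, S i) = ⊤

/-- A generalized `V`-module: a weak module with a semisimple `L(0)`-action, graded by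
the `L(0)`-eigenvalues, with weight-space projections `projW`. -/
structure GenModule (V : VOA) extends WeakModule V where
  wt : ℂ → Submodule ℂ carrier
  projW : ℂ → carrier → carrier
  projW_linear : ∀ h : ℂ, IsLinearMap ℂ (projW h)
  projW_mem : ∀ (h : ℂ) (w : carrier), projW h w ∈ wt h
  projW_eq : ∀ h : ℂ, ∀ w ∈ wt h, projW h w = w
  projW_ne : ∀ g h : ℂ, g ≠ h → ∀ w ∈ wt g, projW h w = 0
  projW_finite : ∀ w : carrier, (Function.support fun h => projW h w).Finite
  projW_sum : ∀ w : carrier, (∑ᶠ h : ℂ, projW h w) = w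
  wt_L0 : ∀ h : ℂ, ∀ w ∈ wt h, op V.omega 1 w = h • w
  wt_op : ∀ k : ℤ, ∀ v ∈ V.wtSpace k, ∀ (h : ℂ) (n : ℤ), ∀ w ∈ wt h,
    op v n w ∈ wt (h + (k : ℂ) - (n : ℂ) - 1)

/-- An ordinary `V`-module: a generalized module whose weight spaces are
finite-dimensional and whose weights are truncated from below in each coset `h + ℤ`. -/
structure OrdModule (V : VOA) extends GenModule V where
  wt_fd : ∀ h : ℂ, FiniteDimensional ℂ ↥(wt h)
  wt_lower : ∀ h : ℂ, ∃ N : ℤ, ∀ m : ℤ, m ≤ N → wt (h + (m : ℂ)) = ⊥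

namespace GenModule

variable {V : VOA} (W : GenModule V)

/-- `W₊ = ⊕_{Re h > 0} W₍ₕ₎`. -/
def posW : Submodule ℂ W.carrier := ⨆ (h : ℂ) (_ : 0 < h.re), W.wt h

/-- `C₁(W) = span(v₋₁W₊ (v ∈ V₊) together with L(-1)W)`. -/
def C1W : Submodule ℂ W.carrier :=
  Submodule.span ℂ
    ({x : W.carrier | ∃ v ∈ V.pos, ∃ w ∈ W.posW, x = W.op v (-1) w}
      ∪ {x : W.carrier | ∃ w : W.carrier, x = W.op V.omega 0 w})

/-- The restricted dual `W' = ⊕ₕ W₍ₕ₎* ⊆ W*`: the linear functionals vanishing on all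
but finitely many weight spaces. -/
def restrictedDual : Set (W.carrier → ℂ) :=
  {α | IsLinearMap ℂ α ∧ {h : ℂ | ∃ w ∈ W.wt h, α w ≠ 0}.Finite}

end GenModule

/-- `D(W)⁰`: the sum of the `L(0)`-eigenspaces of the weak module `D(W) ⊆ W*`, where
`L*(0) = ω*₁` acts on `α ∈ W*` by `(L*(0)α)(w) = α(L(0)w)`. -/
def OrdModule.DW0 {V : VOA} (W : OrdModule V) : Set (W.carrier → ℂ) :=
  {α | ∃ (S : Finset ℂ) (f : ℂ → (W.carrier → ℂ)),
    (∀ h ∈ S, f h ∈ W.toWeakModule.DW ∧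
      ∀ w : W.carrier, f h (W.op V.omega 1 w) = h * f h w) ∧
    α = ∑ h ∈ S, f h}

/-- An ℕ-gradable weak `V`-module: a weak module with an ℕ-grading
`W = ⊕_{n∈ℕ} W(n)` with `v_m W(n) ⊆ W(wt v + n - m - 1)` (graded pieces of negative
index are zero). -/
structure NGradedModule (V : VOA) extends WeakModule V where
  gr : ℤ → Submodule ℂ carrier
  gr_neg : ∀ n : ℤ, n < 0 → gr n = ⊥
  gr_sup : (⨆ n : ℤ, gr n) = ⊤
  gr_indep : ∀ n : ℤ, Disjoint (gr n) (⨆ (m : ℤ) (_ : m ≠ n), gr m)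
  gr_op : ∀ k : ℤ, ∀ v ∈ V.wtSpace k, ∀ m n : ℤ, ∀ w ∈ gr n,
    op v m w ∈ gr (k + n - m - 1)

/-- An intertwining operator of type `(W₃; W₁ W₂)` in the sense of
Frenkel–Huang–Lepowsky, recorded through its complex-indexed modes
`I w₁ h w₂ = (w₁)ₕ w₂` (so `Y(w₁,x)w₂ = Σ_{h∈ℂ} (w₁)ₕ w₂ x^{-h-1}`):
linearity, truncation, the `L(-1)`-derivative property, and the Jacobi identity in
component (Borcherds) form. -/
def IsIntertwiner {V : VOA} (W1 W2 W3 : OrdModule V)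
    (I : W1.carrier → ℂ → W2.carrier → W3.carrier) : Prop :=
  (∀ (h : ℂ) (w2 : W2.carrier), IsLinearMap ℂ fun w1 => I w1 h w2) ∧
  (∀ (w1 : W1.carrier) (h : ℂ), IsLinearMap ℂ (I w1 h)) ∧
  (∀ (w1 : W1.carrier) (w2 : W2.carrier) (h : ℂ),
    ∃ N : ℤ, ∀ n : ℤ, N ≤ n → I w1 (h + (n : ℂ)) w2 = 0) ∧
  (∀ (w1 : W1.carrier) (h : ℂ) (w2 : W2.carrier),
    I (W1.op V.omega 0 w1) h w2 = (-h) • I w1 (h - 1) w2) ∧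
  (∀ (u : V.carrier) (w1 : W1.carrier) (w2 : W2.carrier) (l m : ℤ) (h : ℂ),
    (∑ᶠ i : ℕ, cchoose m i • I (W1.op u (l + (i : ℤ)) w1) ((m : ℂ) + h - (i : ℂ)) w2)
      = ∑ᶠ i : ℕ, ((-1 : ℂ) ^ i * cchoose l i) •
          (W3.op u (l + m - (i : ℤ)) (I w1 (h + (i : ℂ)) w2)
            - ((-1 : ℂ) ^ l) • I w1 ((l : ℂ) + h - (i : ℂ)) (W2.op u (m + (i : ℤ)) w2)))

/-- The fusion rule `dim I(W₃; W₁W₂)` is finite: the space of intertwining operators of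
the indicated type is finite-dimensional. -/
def FusionFinite {V : VOA} (W1 W2 W3 : OrdModule V) : Prop :=
  FiniteDimensional ℂ
    ↥(Submodule.span ℂ {I : W1.carrier → ℂ → W2.carrier → W3.carrier |
        IsIntertwiner W1 W2 W3 I})

end

namespace VOA

variable (V : VOA)

/-- The span of iterated modes of elements of `U` applied to the vacuum. -/
def genSpan (U : Set V.carrier) : Submodule ℂ V.carrier :=
  Submodule.span ℂ {x : V.carrier | ∃ l : List (V.carrier × ℤ),
    (∀ p ∈ l, p.1 ∈ U) ∧ x = V.iterApply l V.one}

theorem one_mem_genSpan (U : Set V.carrier) : V.one ∈ V.genSpan U :=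
  Submodule.subset_span ⟨[], by simp, rfl⟩

theorem op_mem_genSpan (U : Set V.carrier) (u : V.carrier) (hu : u ∈ U) (n : ℤ)
    (w : V.carrier) (hw : w ∈ V.genSpan U) : V.op u n w ∈ V.genSpan U := by
  have hle : V.genSpan U ≤
      (V.genSpan U).comap (IsLinearMap.mk' _ (V.op_linear_right u n)) := by
    refine Submodule.span_le.2 ?_
    rintro x ⟨l, hl, rfl⟩
    refine Submodule.subset_span ⟨(u, n) :: l, ?_, rfl⟩
    intro p hp
    rcases List.mem_cons.1 hp with rfl | hp
    · exact hu
    · exact hl p hp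
  exact hle hw

/-- Elements all of whose modes preserve the generated subspace. -/
def stab (G : Submodule ℂ V.carrier) : Submodule ℂ V.carrier where
  carrier := {a | ∀ n : ℤ, ∀ w ∈ G, V.op a n w ∈ G}
  add_mem' := by
    intro a b ha hb n w hw
    have h := (V.op_linear_left n w).map_add a b
    rw [h]
    exact G.add_mem (ha n w hw) (hb n w hw)
  zero_mem' := by
    intro n w hw
    have h := (V.op_linear_left n w).map_zero
    rw [h]
    exact G.zero_mem
  smul_mem' := by
    intro c a ha n w hw
    have h := (V.op_linear_left n w).map_smul c a
    rw [h]
    exact G.smul_mem c (ha n w hw)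

theorem submodule_finsum_mem (G : Submodule ℂ V.carrier) (f : ℕ → V.carrier)
    (hf : ∀ i, f i ∈ G) : (∑ᶠ i, f i) ∈ G :=
  finsum_induction (fun x => x ∈ G) G.zero_mem (fun _ _ => G.add_mem) hf

theorem op_zero_eq (u v w : V.carrier) (l n : ℤ) :
    V.op (V.op u l v) n w = ∑ᶠ i : ℕ, ((-1 : ℂ) ^ i * cchoose l i) •
          (V.op u (l + 0 - (i : ℤ)) (V.op v (n + (i : ℤ)) w)
            - ((-1 : ℂ) ^ l) • V.op v (l + n - (i : ℤ)) (V.op u (0 + (i : ℤ)) w)) := by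
  rw [← V.borcherds u v w l 0 n, finsum_eq_single _ 0]
  · simp [cchoose]
  · intro i hi
    have : cchoose 0 i = 0 := by
      unfold cchoose
      rw [Finset.prod_eq_zero (Finset.mem_range.2 (Nat.pos_of_ne_zero hi))] <;> simp
    rw [this, zero_smul]

theorem stab_op (G : Submodule ℂ V.carrier) (u v : V.carrier) (hu : u ∈ V.stab G)
    (hv : v ∈ V.stab G) (l : ℤ) : V.op u l v ∈ V.stab G := by
  intro n w hw
  rw [op_zero_eq]
  refine V.submodule_finsum_mem G _ fun i => G.smul_mem _ (G.sub_mem ?_ (G.smul_mem _ ?_))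
  · exact hu _ _ (hv _ _ hw)
  · exact hv _ _ (hu _ _ hw)

theorem subset_stab (U : Set V.carrier) : U ⊆ V.stab (V.genSpan U) :=
  fun u hu n w hw => V.op_mem_genSpan U u hu n w hw

theorem genSpan_le_stab (U : Set V.carrier) : V.genSpan U ≤ V.stab (V.genSpan U) := by
  refine Submodule.span_le.2 ?_
  rintro x ⟨l, hl, rfl⟩
  induction l with
  | nil =>
    intro n w hw
    simp only [iterApply, V.one_op]
    split_ifs
    · exact hw
    · exact Submodule.zero_mem _
  | cons p l ih =>
    exact V.stab_op _ _ _ (V.subset_stab U (hl p (by simp)))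
      (ih fun q hq => hl q (by simp [hq])) _

theorem subset_genSpan (U : Set V.carrier) : U ⊆ V.genSpan U := by
  intro u hu
  have := V.op_mem_genSpan U u hu (-1) _ (V.one_mem_genSpan U)
  rwa [V.create] at this

theorem iSup_wtSpace : (⨆ n : ℤ, V.wtSpace n) = ⊤ := by
  refine eq_top_iff.2 fun v _ => ?_
  rw [← V.proj_sum v]
  exact finsum_induction (fun x => x ∈ (⨆ n : ℤ, V.wtSpace n)) (Submodule.zero_mem _)
    (fun _ _ => Submodule.add_mem _)
    (fun n => Submodule.mem_iSup_of_mem n (V.proj_mem n v))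

/-- `proj` as a linear map. -/
def projL (n : ℤ) : V.carrier →ₗ[ℂ] V.carrier := IsLinearMap.mk' _ (V.proj_linear n)

/-- `op u n` as a linear map. -/
def opR (u : V.carrier) (n : ℤ) : V.carrier →ₗ[ℂ] V.carrier :=
  IsLinearMap.mk' _ (V.op_linear_right u n)

/-- `op · n w` as a linear map. -/
def opL (n : ℤ) (w : V.carrier) : V.carrier →ₗ[ℂ] V.carrier :=
  IsLinearMap.mk' _ (V.op_linear_left n w)

theorem proj_mem_of_wt (G : Submodule ℂ V.carrier) (n k : ℤ) (x : V.carrier)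
    (hx : x ∈ V.wtSpace k) (h : k = n → x ∈ G) : V.proj n x ∈ G := by
  by_cases hk : k = n
  · subst hk
    rw [V.proj_eq k x hx]
    exact h rfl
  · rw [V.proj_ne k n hk x hx]
    exact G.zero_mem

theorem proj_C1 (G : Submodule ℂ V.carrier) (hG : G ≤ V.stab G)
    (hom : V.omega ∈ G) (n : ℤ) (hn : ∀ k : ℤ, k < n → V.wtSpace k ≤ G)
    (c : V.carrier) (hc : c ∈ V.C1) : V.proj n c ∈ G := by
  have key : V.C1 ≤ G.comap (V.projL n) := by
    refine Submodule.span_le.2 ?_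
    rintro x (⟨a, ha, b, hb, rfl⟩ | ⟨v, rfl⟩)
    · have h1 : V.pos ≤ (G.comap (V.projL n)).comap (V.opL (-1) b) := by
        refine iSup₂_le fun k hk a ha => ?_
        have h2 : V.pos ≤ (G.comap (V.projL n)).comap (V.opR a (-1)) := by
          refine iSup₂_le fun m hm b hb => ?_
          refine V.proj_mem_of_wt G n _ _ (V.op_wt k m (-1) a ha b hb) fun h => ?_
          exact hG (hn k (by omega) ha) _ _ (hn m (by omega) hb)
        exact h2 hb
      exact h1 ha
    · have h1 : (⨆ m : ℤ, V.wtSpace m) ≤ (G.comap (V.projL n)).comap (V.opR V.omega 0) := by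
        refine iSup_le fun m v hv => ?_
        refine V.proj_mem_of_wt G n _ _ (V.op_wt 2 m 0 _ V.omega_wt v hv) fun h => ?_
        exact hG hom _ _ (hn m (by omega) hv)
      rw [V.iSup_wtSpace] at h1
      exact h1 trivial
  exact key hc

theorem exists_bound (T : Set V.carrier) (hT : T.Finite) :
    ∃ N : ℤ, ∀ t ∈ T, ∀ n : ℤ, N < n → V.proj n t = 0 := by
  obtain ⟨N, hN⟩ := (hT.biUnion fun t _ => V.proj_finite t).bddAbove
  refine ⟨N, fun t ht n hn => ?_⟩
  by_contra h
  have : n ≤ N := hN (Set.mem_biUnion ht h)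
  omega

end VOA

/-- If `C₁(V)` has finite codimension in `V`, then `V` is finitely
generated as a vertex operator algebra. -/
theorem finitelyGenerated_of_C1_finite_codim (V : VOA)
    (h : FiniteDimensional ℂ (V.carrier ⧸ V.C1)) :
    V.FinitelyGenerated := by
  obtain ⟨Q, hQ⟩ := Submodule.exists_isCompl V.C1
  have hQfd : FiniteDimensional ℂ Q :=
    Module.Finite.equiv (Submodule.quotientEquivOfIsCompl V.C1 Q hQ)
  obtain ⟨T, hT⟩ := (Module.Finite.iff_fg.1 hQfd)
  obtain ⟨N', hN'⟩ := V.exists_bound T T.finite_toSet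
  obtain ⟨N0, hN0⟩ := V.lower_trunc
  set N := max N' 2 with hN
  have hfg : (⨆ n ∈ Finset.Icc N0 N, V.wtSpace n).FG :=
    Submodule.fg_biSup _ _ fun n _ => Module.Finite.iff_fg.1 (V.fd n)
  obtain ⟨S, hS⟩ := hfg
  refine ⟨S, ?_⟩
  change V.genSpan S = ⊤
  have hsm : ∀ n : ℤ, n ≤ N → V.wtSpace n ≤ V.genSpan S := by
    intro n hn
    by_cases h0 : n < N0
    · rw [hN0 n h0]
      exact bot_le
    · refine le_trans ?_ (Submodule.span_le.2 (V.subset_genSpan S))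
      rw [hS]
      exact le_biSup V.wtSpace (Finset.mem_Icc.2 ⟨by omega, hn⟩)
  have hom : V.omega ∈ V.genSpan S := hsm 2 (by omega) V.omega_wt
  have hall : ∀ k : ℕ, ∀ n : ℤ, n ≤ N + k → V.wtSpace n ≤ V.genSpan S := by
    intro k
    induction k with
    | zero => intro n hn; exact hsm n (by simpa using hn)
    | succ k ih =>
      intro n hn v hv
      by_cases hnN : n ≤ N
      · exact hsm n hnN hv
      have hv' : v ∈ V.C1 ⊔ Q := by rw [hQ.sup_eq_top]; trivial
      obtain ⟨c, hc, q, hq, rfl⟩ := Submodule.mem_sup.1 hv'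
      have hq0 : V.proj n q = 0 := by
        have hle : Q ≤ LinearMap.ker (V.projL n) := by
          rw [← hT]
          exact Submodule.span_le.2 fun t ht => hN' t ht n (by omega)
        exact hle hq
      rw [← V.proj_eq n _ hv, (V.proj_linear n).map_add, hq0, add_zero]
      exact V.proj_C1 _ (V.genSpan_le_stab S) hom n
        (fun j hj => ih j (by push_cast at hn; omega)) c hc
  rw [eq_top_iff, ← V.iSup_wtSpace]
  exact iSup_le fun n => hall (n - N).toNat n (by omega)
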